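/- arXiv:0706.3547 — 2 statements merged into one kernel-verified Lean document; each statement's English description precedes it below -/
import Mathlib

section
/- Fix a row-finite k-graph Λ with no sources and an integer l ≥ 1, and let α be an action of ℤ^l on Λ by automorphisms. Let c : Λ ×_α ℤ^l → ℤ^l be the cocycle c(λ,m) = −m. Then the formula ρ((λ,m),n) := (α_{n−m}(λ), (n−m, n)) determines an isomorphism of (k+l)-graphs from the skew product (Λ ×_α ℤ^l) ×_c ℤ^l onto the cartesian product Λ × Δ_l. -/
/-!
The map `ρ` relabels a morphism `((λ,m),n)` of the skew product by transporting `λ` along the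
action by `n - m`, while recording the interval `(n - m, n)`. Given `(n - m, n)`,
both `m` and `n` are recovered, and `α_{n-m}` is invertible with inverse `α_{m-n}`, so `ρ` is
bijective. Functoriality comes down to the homomorphism law of `α`: the twists in the source and
composition of the crossed product are exactly what is absorbed by the change of label. If
`((μ,m),n)` and `((ν,p),n')` are composable then `n = n' - p`, so that
`α_{n'-(m+p)}(μ α_m(ν)) = α_{n-m}(μ) α_{n'-p}(ν)` and
`n - m = n' - (m+p) ≤ n'`; this inequality makes the supremum `(n - m) ⊔ n'` in the encoding of
composition in `Δ_l` equal to the right endpoint of the second morphism.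
-/

/-- The underlying data of a higher-rank graph of rank `ι`: a set `M` of morphisms together
with a degree map into `ι → ℕ`, range and source maps (whose values are thought of as the
identity morphisms at the range/source object), and a (total) composition map, whose values
are only relevant on composable pairs. -/
structure KGraphStr (ι : Type) (M : Type) where
  d : M → ι → ℕ
  rng : M → M
  src : M → M
  comp : M → M → M

namespace KGraphStr

variable {ι ι' M N : Type}

/-- `Λ` is a `k`-graph (of rank `ι`): a countable small category (objects identified with the
identity morphisms, which are the degree-`0` morphisms) together with a degree functor
satisfying the factorisation property. -/
structure IsKGraph (Λ : KGraphStr ι M) : Prop where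
  countable : Countable M
  d_rng : ∀ μ, Λ.d (Λ.rng μ) = 0
  d_src : ∀ μ, Λ.d (Λ.src μ) = 0
  rng_rng : ∀ μ, Λ.rng (Λ.rng μ) = Λ.rng μ
  src_rng : ∀ μ, Λ.src (Λ.rng μ) = Λ.rng μ
  rng_src : ∀ μ, Λ.rng (Λ.src μ) = Λ.src μ
  src_src : ∀ μ, Λ.src (Λ.src μ) = Λ.src μ
  id_comp : ∀ μ, Λ.comp (Λ.rng μ) μ = μ
  comp_id : ∀ μ, Λ.comp μ (Λ.src μ) = μ
  rng_comp : ∀ μ ν, Λ.src μ = Λ.rng ν → Λ.rng (Λ.comp μ ν) = Λ.rng μ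
  src_comp : ∀ μ ν, Λ.src μ = Λ.rng ν → Λ.src (Λ.comp μ ν) = Λ.src ν
  d_comp : ∀ μ ν, Λ.src μ = Λ.rng ν → Λ.d (Λ.comp μ ν) = Λ.d μ + Λ.d ν
  comp_assoc : ∀ μ ν ξ, Λ.src μ = Λ.rng ν → Λ.src ν = Λ.rng ξ →
      Λ.comp (Λ.comp μ ν) ξ = Λ.comp μ (Λ.comp ν ξ)
  factorisation : ∀ (lam : M) (m n : ι → ℕ), Λ.d lam = m + n →
      ∃! p : M × M, Λ.d p.1 = m ∧ Λ.d p.2 = n ∧ Λ.src p.1 = Λ.rng p.2 ∧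
        Λ.comp p.1 p.2 = lam

/-- An action of `ℤ^l` on the rank-`ι` graph `Λ` by automorphisms: a group homomorphism
`m ↦ act m` from `ℤ^l` into the automorphisms of `Λ` (each `act m` is automatically bijective,
with inverse `act (-m)`, and is a degree-preserving functor). -/
structure ZlAction (l : ℕ) (Λ : KGraphStr ι M) where
  act : (Fin l → ℤ) → M → M
  act_zero : ∀ μ, act 0 μ = μ
  act_add : ∀ m n μ, act (m + n) μ = act m (act n μ)
  map_d : ∀ m μ, Λ.d (act m μ) = Λ.d μ
  map_rng : ∀ m μ, Λ.rng (act m μ) = act m (Λ.rng μ)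
  map_src : ∀ m μ, Λ.src (act m μ) = act m (Λ.src μ)
  map_comp : ∀ m μ ν, Λ.src μ = Λ.rng ν →
      act m (Λ.comp μ ν) = Λ.comp (act m μ) (act m ν)

/-- The canonical inclusion of `ℕ^l` in `ℤ^l`. -/
def natToInt {l : ℕ} (m : Fin l → ℕ) : Fin l → ℤ := fun i => (m i : ℤ)

/-- The crossed-product `(k+l)`-graph `Λ ×_α ℤ^l`: morphisms `Λ × ℕ^l`, degree
`d(λ,m) = (d λ, m)`, range `r(λ,m) = (r λ, 0)`, source `s(λ,m) = (α_{-m}(s λ), 0)`, and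
composition `(μ,m)(ν,n) = (μ·α_m(ν), m+n)`. -/
def crossedProd (Λ : KGraphStr ι M) {l : ℕ} (α : ZlAction l Λ) :
    KGraphStr (ι ⊕ Fin l) (M × (Fin l → ℕ)) where
  d := fun p => Sum.elim (Λ.d p.1) (fun i => p.2 i)
  rng := fun p => (Λ.rng p.1, 0)
  src := fun p => (α.act (-(natToInt p.2)) (Λ.src p.1), 0)
  comp := fun p q => (Λ.comp p.1 (α.act (natToInt p.2) q.1), p.2 + q.2)

end KGraphStr

namespace KGraphStr

variable {ι M : Type}

/-- The set `vΛ^p` of morphisms with range `v` and degree `p`. -/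
def rngDegSet (Λ : KGraphStr ι M) (v : M) (p : ι → ℕ) : Set M :=
  {lam | Λ.rng lam = v ∧ Λ.d lam = p}

/-- The set `Λ^p v` of morphisms with source `v` and degree `p`. -/
def srcDegSet (Λ : KGraphStr ι M) (v : M) (p : ι → ℕ) : Set M :=
  {lam | Λ.src lam = v ∧ Λ.d lam = p}

/-- A rank-`ι` graph is row-finite if `vΛ^p` is finite for every vertex `v` (i.e. every
degree-zero morphism) and every `p`. -/
def RowFinite (Λ : KGraphStr ι M) : Prop :=
  ∀ v, Λ.d v = 0 → ∀ p, (Λ.rngDegSet v p).Finite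

/-- A rank-`ι` graph has no sources if `vΛ^p` is nonempty for every vertex `v` and every `p`. -/
def NoSources (Λ : KGraphStr ι M) : Prop :=
  ∀ v, Λ.d v = 0 → ∀ p, (Λ.rngDegSet v p).Nonempty

end KGraphStr

namespace KGraphStr

variable {ι M N : Type}

theorem pi_zero_le (f : ι → ℕ) : (0 : ι → ℕ) ≤ f := fun _ => Nat.zero_le _

/-- The morphisms of the rank-`ι` graph `Ω_ι`: pairs `(m,n)` with `m ≤ n` in `ℕ^ι`. -/
def OmegaMor (ι : Type) : Type := {q : (ι → ℕ) × (ι → ℕ) // q.1 ≤ q.2}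

/-- The rank-`ι` graph `Ω_ι` with morphisms `{(m,n) : m ≤ n}`, `r(m,n) = (m,m)`,
`s(m,n) = (n,n)`, `d(m,n) = n - m` and composition `(m,n)(n,p) = (m,p)`. -/
def Omega (ι : Type) : KGraphStr ι (OmegaMor ι) where
  d := fun q => q.1.2 - q.1.1
  rng := fun q => ⟨(q.1.1, q.1.1), le_rfl⟩
  src := fun q => ⟨(q.1.2, q.1.2), le_rfl⟩
  comp := fun q q' => ⟨(q.1.1, q.1.1 ⊔ q'.1.2), le_sup_left⟩

/-- A morphism of rank-`ι` graphs (a degree-preserving functor). -/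
structure IsKGraphHom (Γ : KGraphStr ι N) (Λ : KGraphStr ι M) (f : N → M) : Prop where
  map_d : ∀ x, Λ.d (f x) = Γ.d x
  map_rng : ∀ x, Λ.rng (f x) = f (Γ.rng x)
  map_src : ∀ x, Λ.src (f x) = f (Γ.src x)
  map_comp : ∀ x y, Γ.src x = Γ.rng y → f (Γ.comp x y) = Λ.comp (f x) (f y)

/-- An infinite path in `Λ`: a degree-preserving functor `x : Ω_ι → Λ`. -/
def InfPath (Λ : KGraphStr ι M) : Type :=
  {x : OmegaMor ι → M // IsKGraphHom (Omega ι) Λ x}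

/-- The vertex `x(n)` on an infinite path `x`. -/
def InfPath.vertex {Λ : KGraphStr ι M} (x : InfPath Λ) (n : ι → ℕ) : M :=
  x.1 ⟨(n, n), le_rfl⟩

/-- The cylinder set `λΛ^∞` of infinite paths whose initial segment of degree `d λ`
is `λ`. -/
def cylinder (Λ : KGraphStr ι M) (lam : M) : Set (InfPath Λ) :=
  {x | x.1 ⟨(0, Λ.d lam), pi_zero_le _⟩ = lam}

/-- The topology on the infinite-path space generated by the cylinder sets. -/
def pathTopology (Λ : KGraphStr ι M) : TopologicalSpace (InfPath Λ) :=
  TopologicalSpace.generateFrom {S | ∃ lam, S = Λ.cylinder lam}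

end KGraphStr

namespace KGraphStr

variable {ι ι' M N : Type}

/-- The morphisms of the rank-`l` graph `Δ_l`: pairs `(m,n)` with `m ≤ n` in `ℤ^l`. -/
def DeltaMor (l : ℕ) : Type := {q : (Fin l → ℤ) × (Fin l → ℤ) // q.1 ≤ q.2}

/-- The rank-`l` graph `Δ_l = {(m,n) ∈ ℤ^l × ℤ^l : m ≤ n}` with `r(m,n) = (m,m)`,
`s(m,n) = (n,n)`, `d(m,n) = n - m` and composition `(m,n)(n,p) = (m,p)`. -/
def Delta (l : ℕ) : KGraphStr (Fin l) (DeltaMor l) where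
  d := fun q i => ((q.1.2 - q.1.1) i).toNat
  rng := fun q => ⟨(q.1.1, q.1.1), le_rfl⟩
  src := fun q => ⟨(q.1.2, q.1.2), le_rfl⟩
  comp := fun q q' => ⟨(q.1.1, q.1.1 ⊔ q'.1.2), le_sup_left⟩

/-- The cartesian-product rank-`(ι ⊕ ι')` graph `Λ × Γ`, with coordinatewise range, source
and composition, and degree `d(λ,γ) = (d λ, d γ)`. -/
def cartProd (Λ : KGraphStr ι M) (Γ : KGraphStr ι' N) : KGraphStr (ι ⊕ ι') (M × N) where
  d := fun p => Sum.elim (Λ.d p.1) (Γ.d p.2)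
  rng := fun p => (Λ.rng p.1, Γ.rng p.2)
  src := fun p => (Λ.src p.1, Γ.src p.2)
  comp := fun p q => (Λ.comp p.1 q.1, Γ.comp p.2 q.2)

/-- The skew-product graph `Ξ ×_c G` associated to a cocycle `c : Ξ → G`: it equals
`Ξ × G` as a set, with `s_c(μ,g) = (s μ, g)`, `r_c(μ,g) = (r μ, c(μ)+g)`,
`(μ, c(ν)+g)·(ν,g) = (μν, g)` and `d_c(μ,g) = d μ`. -/
def skewProd (Ξ : KGraphStr ι N) (G : Type) [AddCommGroup G] (c : N → G) :
    KGraphStr ι (N × G) where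
  d := fun p => Ξ.d p.1
  rng := fun p => (Ξ.rng p.1, c p.1 + p.2)
  src := fun p => (Ξ.src p.1, p.2)
  comp := fun p q => (Ξ.comp p.1 q.1, q.2)

end KGraphStr

open KGraphStr

namespace KGraphStr

theorem natToInt_zero {l : ℕ} : natToInt (0 : Fin l → ℕ) = 0 := by
  funext i; simp [natToInt]

theorem natToInt_add {l : ℕ} (m n : Fin l → ℕ) :
    natToInt (m + n) = natToInt m + natToInt n := by
  funext i; simp [natToInt]

theorem natToInt_nonneg {l : ℕ} (m : Fin l → ℕ) : 0 ≤ natToInt m :=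
  fun _ => Int.natCast_nonneg _

theorem natToInt_injective {l : ℕ} : Function.Injective (natToInt (l := l)) := by
  intro m n h
  funext i
  exact Int.ofNat_inj.mp (congrFun h i)

theorem ZlAction.act_neg_act {ι M : Type} {l : ℕ} {Λ : KGraphStr ι M} (α : ZlAction l Λ)
    (m : Fin l → ℤ) (μ : M) : α.act (-m) (α.act m μ) = μ := by
  rw [← α.act_add, neg_add_cancel, α.act_zero]

theorem ZlAction.act_act_neg {ι M : Type} {l : ℕ} {Λ : KGraphStr ι M} (α : ZlAction l Λ)
    (m : Fin l → ℤ) (μ : M) : α.act m (α.act (-m) μ) = μ := by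
  rw [← α.act_add, add_neg_cancel, α.act_zero]

end KGraphStr

theorem stmt9 {k l : ℕ} (hl : 1 ≤ l) {M : Type} (Λ : KGraphStr (Fin k) M)
    (hΛ : Λ.IsKGraph) (hrf : RowFinite Λ) (hns : NoSources Λ) (α : ZlAction l Λ) :
    -- the cocycle `c(λ,m) = -m` on the crossed-product graph
    (∀ p q : M × (Fin l → ℕ), (crossedProd Λ α).src p = (crossedProd Λ α).rng q →
      -(natToInt ((crossedProd Λ α).comp p q).2) = -(natToInt p.2) + -(natToInt q.2)) ∧
    -- `ρ((λ,m),n) = (α_{n-m}(λ), (n-m, n))` is an isomorphism of `(k+l)`-graphs from the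
    -- skew product `(Λ ×_α ℤ^l) ×_c ℤ^l` onto the cartesian product `Λ × Δ_l`
    (IsKGraphHom
      (skewProd (crossedProd Λ α) (Fin l → ℤ) (fun p => -(natToInt p.2)))
      (cartProd Λ (Delta l))
      (fun q => (α.act (q.2 - natToInt q.1.2) q.1.1,
        ⟨(q.2 - natToInt q.1.2, q.2),
          sub_le_self _ (fun i => Int.natCast_nonneg _)⟩)) ∧
    Function.Bijective
      (fun q : (M × (Fin l → ℕ)) × (Fin l → ℤ) =>
        ((α.act (q.2 - natToInt q.1.2) q.1.1,
          (⟨(q.2 - natToInt q.1.2, q.2),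
            sub_le_self _ (fun i => Int.natCast_nonneg _)⟩ : DeltaMor l)) :
          M × DeltaMor l))) := by
  refine ⟨fun p q _ => ?_, ⟨?_, ?_, ?_, ?_⟩, ?_, ?_⟩
  · change -(natToInt (p.2 + q.2)) = _
    rw [natToInt_add, neg_add]
  · rintro ⟨⟨μ, m⟩, n⟩
    funext i
    rcases i with i | i
    · exact congrFun (α.map_d _ μ) i
    · change ((n - (n - natToInt m)) i).toNat = m i
      simp [natToInt]
  · rintro ⟨⟨μ, m⟩, n⟩
    have h : -natToInt m + n - natToInt (0 : Fin l → ℕ) = n - natToInt m := by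
      rw [natToInt_zero]; abel
    refine Prod.ext ?_ (Subtype.ext (Prod.ext ?_ ?_))
    · change Λ.rng (α.act (n - natToInt m) μ) = α.act (-natToInt m + n - natToInt 0) (Λ.rng μ)
      rw [h, α.map_rng]
    · exact h.symm
    · change n - natToInt m = -natToInt m + n
      abel
  · rintro ⟨⟨μ, m⟩, n⟩
    have h : n - natToInt (0 : Fin l → ℕ) = n := by rw [natToInt_zero, sub_zero]
    refine Prod.ext ?_ (Subtype.ext (Prod.ext ?_ rfl))
    · change Λ.src (α.act (n - natToInt m) μ) =
        α.act (n - natToInt 0) (α.act (-natToInt m) (Λ.src μ))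
      rw [h, α.map_src, ← α.act_add, sub_eq_add_neg]
    · exact h.symm
  · rintro ⟨⟨μ, m⟩, n⟩ ⟨⟨ν, p⟩, n'⟩ hc
    have hn : n = -natToInt p + n' := congrArg Prod.snd hc
    have hs : α.act (-natToInt m) (Λ.src μ) = Λ.rng ν := congrArg (fun q => q.1.1) hc
    have hμν : Λ.src μ = Λ.rng (α.act (natToInt m) ν) := by
      rw [α.map_rng, ← hs, α.act_act_neg]
    have h : n' - natToInt (m + p) = n - natToInt m := by
      rw [natToInt_add, hn]; abel
    have hle : n - natToInt m ≤ n' := by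
      rw [← h]
      exact sub_le_self _ (natToInt_nonneg _)
    refine Prod.ext ?_ (Subtype.ext (Prod.ext ?_ ?_))
    · change α.act (n' - natToInt (m + p)) (Λ.comp μ (α.act (natToInt m) ν)) =
        Λ.comp (α.act (n - natToInt m) μ) (α.act (n' - natToInt p) ν)
      have hν : n - natToInt m + natToInt m = n' - natToInt p := by
        rw [hn]; abel
      rw [h, α.map_comp _ _ _ hμν, ← α.act_add, hν]
    · exact h
    · exact (sup_eq_right.mpr hle).symm
  · rintro ⟨⟨μ, m⟩, n⟩ ⟨⟨ν, p⟩, n'⟩ he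
    have h1 : α.act (n - natToInt m) μ = α.act (n' - natToInt p) ν := congrArg Prod.fst he
    have h2 : n - natToInt m = n' - natToInt p := congrArg (fun q => q.2.1.1) he
    have h3 : n = n' := congrArg (fun q => q.2.1.2) he
    subst h3
    obtain rfl : m = p := natToInt_injective (sub_right_injective h2)
    have h4 := congrArg (α.act (-(n - natToInt m))) h1
    rw [α.act_neg_act, α.act_neg_act] at h4
    rw [h4]
  · rintro ⟨μ, ⟨⟨a, b⟩, hab⟩⟩
    have hm : natToInt (fun i => (b i - a i).toNat) = b - a := by
      funext i
      exact Int.toNat_of_nonneg (sub_nonneg.mpr (hab i))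
    have h : b - natToInt (fun i => (b i - a i).toNat) = a := by
      rw [hm, sub_sub_cancel]
    refine ⟨((α.act (-a) μ, fun i => (b i - a i).toNat), b), ?_⟩
    refine Prod.ext ?_ (Subtype.ext (Prod.ext h rfl))
    change α.act (b - natToInt (fun i => (b i - a i).toNat)) (α.act (-a) μ) = μ
    rw [h, α.act_act_neg]
end

section
/- Let Ξ be a (k+l)-graph such that for every vertex v of Ξ and every j ∈ {1,…,l} there is exactly one morphism of degree (0,e_j) with range v and exactly one with source v. Then for each vertex v and each m ∈ ℕ^l there is a unique morphism η_{v,m} of degree (0,m) with source v; there is a unique action α of ℤ^l by automorphisms of the k-graph Ξ^{(ℕ^k,0)} satisfying α_m(ξ) = (η_{r(ξ),m}·ξ)((0,0), d(ξ)) for all ξ ∈ Ξ^{(ℕ^k,0)} and m ∈ ℕ^l; and Ξ is isomorphic (as a (k+l)-graph) to the crossed product Ξ^{(ℕ^k,0)} ×_α ℤ^l. -/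
namespace KGraphStr

variable {ι M N : Type} {l : ℕ}

open Classical in
/-- The sub-`k`-graph `Ξ^{(ℕ^k,0)}` of a `(k+l)`-graph `Ξ`, consisting of the morphisms
whose degree is of the form `(p, 0)`. -/
noncomputable def restrict (Ξ : KGraphStr (ι ⊕ Fin l) N) (hΞ : IsKGraph Ξ) :
    KGraphStr ι {ξ : N // ∀ j, Ξ.d ξ (Sum.inr j) = 0} where
  d := fun ξ i => Ξ.d ξ.1 (Sum.inl i)
  rng := fun ξ => ⟨Ξ.rng ξ.1, fun j => congrFun (hΞ.d_rng ξ.1) (Sum.inr j)⟩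
  src := fun ξ => ⟨Ξ.src ξ.1, fun j => congrFun (hΞ.d_src ξ.1) (Sum.inr j)⟩
  comp := fun ξ η =>
    if h : Ξ.src ξ.1 = Ξ.rng η.1 then
      ⟨Ξ.comp ξ.1 η.1, fun j => by
        have hd := congrFun (hΞ.d_comp ξ.1 η.1 h) (Sum.inr j)
        rw [hd]
        show Ξ.d ξ.1 (Sum.inr j) + Ξ.d η.1 (Sum.inr j) = 0
        rw [ξ.2 j, η.2 j]⟩
    else ξ

end KGraphStr

namespace KGraphStr

variable {ι N : Type} {l : ℕ}

/-! ### Factorisations, vertices and the opposite graph -/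

theorem IsKGraph.factor_unique {Ξ : KGraphStr ι N} (h : Ξ.IsKGraph) {a b a' b' : N}
    (hab : Ξ.src a = Ξ.rng b) (hab' : Ξ.src a' = Ξ.rng b') (hc : Ξ.comp a b = Ξ.comp a' b')
    (hd : Ξ.d a = Ξ.d a') : a = a' ∧ b = b' := by
  have e1 := h.d_comp _ _ hab
  have e2 := h.d_comp _ _ hab'
  have hdb : Ξ.d b = Ξ.d b' := by
    rw [hc, e2, hd] at e1
    exact (add_left_cancel e1).symm
  have := (h.factorisation (Ξ.comp a b) (Ξ.d a) (Ξ.d b) e1).unique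
    (y₁ := (a, b)) (y₂ := (a', b')) ⟨rfl, rfl, hab, rfl⟩ ⟨hd.symm, hdb.symm, hab', hc.symm⟩
  exact ⟨congrArg Prod.fst this, congrArg Prod.snd this⟩

theorem IsKGraph.rng_eq_self {Ξ : KGraphStr ι N} (h : Ξ.IsKGraph) {v : N} (hv : Ξ.d v = 0) :
    Ξ.rng v = v :=
  (h.factor_unique (h.src_rng v) (h.rng_src v).symm ((h.id_comp v).trans (h.comp_id v).symm)
    ((h.d_rng v).trans hv.symm)).1

theorem IsKGraph.src_eq_self {Ξ : KGraphStr ι N} (h : Ξ.IsKGraph) {v : N} (hv : Ξ.d v = 0) :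
    Ξ.src v = v := by
  rw [← h.rng_eq_self hv, h.src_rng]

/-- The opposite graph: ranges and sources are exchanged and composition is reversed. -/
def op (Ξ : KGraphStr ι N) : KGraphStr ι N where
  d := Ξ.d
  rng := Ξ.src
  src := Ξ.rng
  comp := fun x y => Ξ.comp y x

theorem IsKGraph.op {Ξ : KGraphStr ι N} (h : Ξ.IsKGraph) : Ξ.op.IsKGraph where
  countable := h.countable
  d_rng := h.d_src
  d_src := h.d_rng
  rng_rng := h.src_src
  src_rng := h.rng_src
  rng_src := h.src_rng
  src_src := h.rng_rng
  id_comp := h.comp_id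
  comp_id := h.id_comp
  rng_comp := fun μ ν e => h.src_comp ν μ e.symm
  src_comp := fun μ ν e => h.rng_comp ν μ e.symm
  d_comp := fun μ ν e => (h.d_comp ν μ e.symm).trans (add_comm _ _)
  comp_assoc := fun μ ν ξ e e' => (h.comp_assoc ξ ν μ e'.symm e.symm).symm
  factorisation := by
    intro lam m n hd
    obtain ⟨⟨a, b⟩, ⟨h1, h2, h3, h4⟩, -⟩ :=
      h.factorisation lam n m (hd.trans (add_comm _ _))
    refine ⟨(b, a), ⟨h2, h1, h3.symm, h4⟩, ?_⟩
    rintro ⟨b', a'⟩ ⟨g2, g1, g3, g4⟩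
    obtain ⟨e1, e2⟩ := h.factor_unique (a := a') (b := b') g3.symm h3
      (show Ξ.comp a' b' = _ from g4.trans h4.symm) (g1.trans h1.symm)
    exact Prod.ext e2 e1

theorem elim_add (m n : Fin l → ℕ) : (Sum.elim (0 : ι → ℕ) (m + n) : ι ⊕ Fin l → ℕ) =
    Sum.elim (0 : ι → ℕ) m + Sum.elim (0 : ι → ℕ) n := by
  funext i; cases i <;> simp

theorem elim_zero : (Sum.elim (0 : ι → ℕ) (0 : Fin l → ℕ) : ι ⊕ Fin l → ℕ) = 0 := by
  funext i; cases i <;> rfl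

/-! ### Morphisms of degree `(0, m)` -/

/-- The set of `m` for which every vertex is the source of exactly one morphism of degree `(0, m)`
is a submonoid of `ℕ^l`, so it is everything once it contains the generators. -/
theorem exists_unique_src {Ξ : KGraphStr (ι ⊕ Fin l) N} (h : Ξ.IsKGraph)
    (hu : ∀ v, Ξ.d v = 0 → ∀ j : Fin l,
      ∃! f, Ξ.d f = Sum.elim (0 : ι → ℕ) (Pi.single j 1) ∧ Ξ.src f = v)
    (v : N) (hv : Ξ.d v = 0) (m : Fin l → ℕ) :
    ∃! η, Ξ.d η = Sum.elim (0 : ι → ℕ) m ∧ Ξ.src η = v := by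
  let S : AddSubmonoid (Fin l → ℕ) :=
    { carrier := {m | ∀ v, Ξ.d v = 0 → ∃! η, Ξ.d η = Sum.elim (0 : ι → ℕ) m ∧ Ξ.src η = v}
      zero_mem' := by
        intro v hv
        refine ⟨v, ⟨hv.trans elim_zero.symm, h.src_eq_self hv⟩, ?_⟩
        rintro w ⟨hw, hs⟩
        rw [← hs, h.src_eq_self (hw.trans elim_zero)]
      add_mem' := by
        intro m n hm hn v hv
        obtain ⟨b, ⟨hb, hbs⟩, hbu⟩ := hn v hv
        obtain ⟨a, ⟨ha, has⟩, hau⟩ := hm (Ξ.rng b) (h.d_rng b)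
        refine ⟨Ξ.comp a b, ⟨?_, ?_⟩, ?_⟩
        · rw [h.d_comp _ _ has, ha, hb, elim_add]
        · rw [h.src_comp _ _ has, hbs]
        · rintro c ⟨hc, hcs⟩
          obtain ⟨⟨a', b'⟩, ⟨h1, h2, h3, h4⟩, -⟩ := h.factorisation c _ _ (hc.trans (elim_add m n))
          dsimp only at h1 h2 h3 h4
          have eb : b' = b := hbu _ ⟨h2, by rw [← h.src_comp _ _ h3, h4, hcs]⟩
          subst eb
          have ea : a' = a := hau _ ⟨h1, h3⟩
          rw [← h4, ea] }
  have hS : ∀ m, m ∈ S := by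
    intro m
    rw [← Finset.univ_sum_single m]
    refine S.sum_mem fun j _ => ?_
    have hj : (Pi.single j 1 : Fin l → ℕ) ∈ S := fun v hv => hu v hv j
    have e : (Pi.single j (m j) : Fin l → ℕ) = m j • Pi.single j 1 := by
      rw [← Pi.single_smul]; simp
    rw [e]
    exact S.nsmul_mem hj _
  exact hS m v hv

/-! ### Squares -/

/-- Commuting squares `y · b = η · x` whose sides `η`, `b` have degree `(0, m)`; they say that
`y` is the image of `x` under the translation by `m`. -/
def Sq (Ξ : KGraphStr (ι ⊕ Fin l) N) (m : Fin l → ℕ) (x y : N) : Prop :=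
  ∃ η b : N, Ξ.d η = Sum.elim (0 : ι → ℕ) m ∧ Ξ.src η = Ξ.rng x ∧
    Ξ.d b = Sum.elim (0 : ι → ℕ) m ∧ Ξ.src y = Ξ.rng b ∧ Ξ.comp y b = Ξ.comp η x

/-- Every vertex `v` is the source of exactly one morphism of each degree `(0, m)`. -/
def UniqueSrc (Ξ : KGraphStr (ι ⊕ Fin l) N) : Prop :=
  ∀ v, Ξ.d v = 0 → ∀ m : Fin l → ℕ,
    ∃! η, Ξ.d η = Sum.elim (0 : ι → ℕ) m ∧ Ξ.src η = v

theorem Sq.of_op {Ξ : KGraphStr (ι ⊕ Fin l) N} {m : Fin l → ℕ} {x y : N} (s : Ξ.op.Sq m x y) :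
    Ξ.Sq m y x := by
  obtain ⟨η, b, h1, h2, h3, h4, h5⟩ := s
  exact ⟨b, η, h3, h4.symm, h1, h2.symm, h5.symm⟩

theorem Sq.to_op {Ξ : KGraphStr (ι ⊕ Fin l) N} {m : Fin l → ℕ} {x y : N} (s : Ξ.Sq m y x) :
    Ξ.op.Sq m x y := by
  obtain ⟨η, b, h1, h2, h3, h4, h5⟩ := s
  exact ⟨b, η, h3, h4.symm, h1, h2.symm, h5.symm⟩

variable {Ξ : KGraphStr (ι ⊕ Fin l) N} {m n : Fin l → ℕ} {x y z x' y' : N}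

theorem Sq.d_eq (h : Ξ.IsKGraph) (s : Ξ.Sq m x y) : Ξ.d y = Ξ.d x := by
  obtain ⟨η, b, h1, h2, h3, h4, h5⟩ := s
  have e := h.d_comp _ _ h4
  rw [h5, h.d_comp _ _ h2, h1, h3, add_comm] at e
  exact (add_right_cancel e).symm

theorem exists_unique_sq (h : Ξ.IsKGraph) (hs : Ξ.UniqueSrc) (m : Fin l → ℕ) (x : N) :
    ∃! y, Ξ.Sq m x y := by
  obtain ⟨η, ⟨h1, h2⟩, hu⟩ := hs (Ξ.rng x) (h.d_rng x) m
  have hd : Ξ.d (Ξ.comp η x) = Ξ.d x + Sum.elim (0 : ι → ℕ) m := by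
    rw [h.d_comp _ _ h2, h1, add_comm]
  obtain ⟨⟨y, b⟩, ⟨g1, g2, g3, g4⟩, -⟩ := h.factorisation _ _ _ hd
  refine ⟨y, ⟨η, b, h1, h2, g2, g3, g4⟩, fun y' s => ?_⟩
  have hy' := s.d_eq h
  obtain ⟨η', b', k1, k2, k3, k4, k5⟩ := s
  obtain rfl := hu _ ⟨k1, k2⟩
  exact (h.factor_unique k4 g3 (k5.trans g4.symm) (hy'.trans g1.symm)).1

theorem Sq.add (h : Ξ.IsKGraph) (s : Ξ.Sq m y z) (t : Ξ.Sq n x y) : Ξ.Sq (m + n) x z := by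
  obtain ⟨η, b, h1, h2, h3, h4, h5⟩ := s
  obtain ⟨η', b', k1, k2, k3, k4, k5⟩ := t
  have e1 : Ξ.src η = Ξ.rng η' := by
    rw [h2, ← h.rng_comp _ _ k4, k5, h.rng_comp _ _ k2]
  have e2 : Ξ.src b = Ξ.rng b' := by
    rw [← h.src_comp _ _ h4, h5, h.src_comp _ _ h2, k4]
  refine ⟨Ξ.comp η η', Ξ.comp b b', ?_, ?_, ?_, ?_, ?_⟩
  · rw [h.d_comp _ _ e1, h1, k1, elim_add]
  · rw [h.src_comp _ _ e1, k2]
  · rw [h.d_comp _ _ e2, h3, k3, elim_add]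
  · rw [h.rng_comp _ _ e2, h4]
  · rw [← h.comp_assoc _ _ _ h4 e2, h5, h.comp_assoc _ _ _ h2 k4, k5, h.comp_assoc _ _ _ e1 k2]

theorem Sq.rng (h : Ξ.IsKGraph) (s : Ξ.Sq m x y) : Ξ.Sq m (Ξ.rng x) (Ξ.rng y) := by
  obtain ⟨η, b, h1, h2, h3, h4, h5⟩ := s
  have e : Ξ.rng y = Ξ.rng η := by rw [← h.rng_comp _ _ h4, h5, h.rng_comp _ _ h2]
  refine ⟨η, η, h1, by rw [h.rng_rng, h2], h1, by rw [h.src_rng, e], ?_⟩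
  rw [e, h.id_comp, ← h2, h.comp_id]

theorem Sq.src (h : Ξ.IsKGraph) (s : Ξ.Sq m x y) : Ξ.Sq m (Ξ.src x) (Ξ.src y) :=
  (Sq.rng h.op s.to_op).of_op

theorem Sq.comp (h : Ξ.IsKGraph) (hs : Ξ.UniqueSrc) (s : Ξ.Sq m x y) (t : Ξ.Sq m x' y')
    (hx : Ξ.src x = Ξ.rng x') : Ξ.Sq m (Ξ.comp x x') (Ξ.comp y y') := by
  obtain ⟨η, b, h1, h2, h3, h4, h5⟩ := s
  obtain ⟨η', b', k1, k2, k3, k4, k5⟩ := t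
  have e : b = η' := (hs (Ξ.rng x') (h.d_rng _) m).unique
    ⟨h3, by rw [← h.src_comp _ _ h4, h5, h.src_comp _ _ h2, hx]⟩ ⟨k1, k2⟩
  subst e
  have e2 : Ξ.src y = Ξ.rng y' := by
    rw [h4, ← h.rng_comp _ _ k2, ← k5, h.rng_comp _ _ k4]
  refine ⟨η, b', h1, by rw [h.rng_comp _ _ hx, h2], k3, by rw [h.src_comp _ _ e2, k4], ?_⟩
  rw [h.comp_assoc _ _ _ e2 k4, k5, ← h.comp_assoc _ _ _ h4 k2, h5, h.comp_assoc _ _ _ h2 hx]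

/-! ### Translations as automorphisms, and their extension to `ℤ^l` -/

/-- A permutation of the morphisms is an automorphism if it is a degree-preserving functor. -/
structure IsAut (Ξ : KGraphStr ι N) (σ : Equiv.Perm N) : Prop where
  map_d : ∀ x, Ξ.d (σ x) = Ξ.d x
  map_rng : ∀ x, Ξ.rng (σ x) = σ (Ξ.rng x)
  map_src : ∀ x, Ξ.src (σ x) = σ (Ξ.src x)
  map_comp : ∀ x y, Ξ.src x = Ξ.rng y → σ (Ξ.comp x y) = Ξ.comp (σ x) (σ y)

theorem IsAut.mul {Ξ : KGraphStr ι N} {σ τ : Equiv.Perm N} (hσ : Ξ.IsAut σ) (hτ : Ξ.IsAut τ) :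
    Ξ.IsAut (σ * τ) where
  map_d x := (hσ.map_d _).trans (hτ.map_d _)
  map_rng x := by simp [hσ.map_rng, hτ.map_rng]
  map_src x := by simp [hσ.map_src, hτ.map_src]
  map_comp x y e := by
    have e' : Ξ.src (τ x) = Ξ.rng (τ y) := by rw [hτ.map_src, hτ.map_rng, e]
    simp [hτ.map_comp _ _ e, hσ.map_comp _ _ e']

theorem perm_apply_inv (σ : Equiv.Perm N) (x : N) : σ (σ⁻¹ x) = x :=
  σ.apply_symm_apply x

theorem IsAut.inv {Ξ : KGraphStr ι N} {σ : Equiv.Perm N} (hσ : Ξ.IsAut σ) : Ξ.IsAut σ⁻¹ where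
  map_d x := by rw [← hσ.map_d, perm_apply_inv]
  map_rng x := by
    rw [Equiv.Perm.eq_inv_iff_eq, ← hσ.map_rng, perm_apply_inv]
  map_src x := by
    rw [Equiv.Perm.eq_inv_iff_eq, ← hσ.map_src, perm_apply_inv]
  map_comp x y e := by
    have e' : Ξ.src (σ⁻¹ x) = Ξ.rng (σ⁻¹ y) := by
      apply σ.injective
      rw [← hσ.map_src, ← hσ.map_rng, perm_apply_inv, perm_apply_inv, e]
    rw [Equiv.Perm.inv_eq_iff_eq, hσ.map_comp _ _ e', perm_apply_inv,
      perm_apply_inv]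

/-- Injectivity and surjectivity of the translation by `m` both come from the uniqueness and
existence of squares in the opposite graph. -/
theorem exists_perm (h : Ξ.IsKGraph) (hs : Ξ.UniqueSrc) (hr : Ξ.op.UniqueSrc)
    (m : Fin l → ℕ) : ∃ σ : Equiv.Perm N, ∀ x, Ξ.Sq m x (σ x) := by
  choose f hf _ using exists_unique_sq h hs m
  choose g hg hgu using exists_unique_sq h.op hr m
  refine ⟨Equiv.ofBijective f ⟨fun x y e => ?_, fun y => ⟨g y, ?_⟩⟩, hf⟩
  · rw [hgu _ _ (hf x).to_op, e]
    exact (hgu _ _ (hf y).to_op).symm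
  · exact (exists_unique_sq h hs m (g y)).unique (hf _) (hg y).of_op

theorem Sq.aut (h : Ξ.IsKGraph) (hs : Ξ.UniqueSrc) {σ : Equiv.Perm N}
    (hσ : ∀ x, Ξ.Sq m x (σ x)) : Ξ.IsAut σ where
  map_d x := (hσ x).d_eq h
  map_rng x := (exists_unique_sq h hs m _).unique ((hσ x).rng h) (hσ _)
  map_src x := (exists_unique_sq h hs m _).unique ((hσ x).src h) (hσ _)
  map_comp x y e := (exists_unique_sq h hs m _).unique (hσ _) ((hσ x).comp h hs (hσ y) e)

theorem exists_nat_sub (z : Fin l → ℤ) : ∃ p q : Fin l → ℕ, z + natToInt q = natToInt p :=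
  ⟨fun i => (z i).toNat, fun i => (-z i).toNat, by
    funext i; simp only [natToInt, Pi.add_apply]; omega⟩

/-- An additive map from `ℕ^l` to a group extends to `ℤ^l`, by sending `p - q` to `T p / T q`. -/
theorem exists_int_extension {G : Type} [Group G] (T : (Fin l → ℕ) → G)
    (hT : ∀ m n, T (m + n) = T m * T n) :
    ∃ A : (Fin l → ℤ) → G, (∀ z w, A (z + w) = A z * A w) ∧ (∀ m, A (natToInt m) = T m) ∧
      ∀ z, ∃ p q, A z = T p * (T q)⁻¹ := by
  have hcomm : ∀ m n, Commute (T m) (T n) := fun m n => by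
    rw [Commute, SemiconjBy, ← hT, ← hT, add_comm]
  choose p q hpq using exists_nat_sub (l := l)
  -- The value does not depend on how `z` is written as a difference.
  have key : ∀ z a b, z + natToInt b = natToInt a → T (p z) * (T (q z))⁻¹ = T a * (T b)⁻¹ := by
    intro z a b hab
    have e : p z + b = a + q z := by
      funext i
      have h1 := congrFun (hpq z) i
      have h2 := congrFun hab i
      simp only [natToInt, Pi.add_apply] at h1 h2 ⊢
      omega
    have e' := congrArg T e
    rw [hT, hT] at e'
    rw [mul_inv_eq_iff_eq_mul, mul_assoc, ((hcomm b (q z)).inv_left).eq, ← mul_assoc,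
      eq_mul_inv_iff_mul_eq, e']
  refine ⟨fun z => T (p z) * (T (q z))⁻¹, fun z w => ?_, fun m => ?_, fun z => ⟨_, _, rfl⟩⟩
  · have e := key (z + w) (p z + p w) (q w + q z) (by
      funext i
      have h1 := congrFun (hpq z) i
      have h2 := congrFun (hpq w) i
      simp only [natToInt, Pi.add_apply] at h1 h2 ⊢
      push_cast
      omega)
    dsimp only
    rw [e, hT, hT, mul_inv_rev]
    have c1 := ((hcomm (q z) (p w)).inv_left).eq
    simp only [mul_assoc]
    rw [← mul_assoc (T (q z))⁻¹ (T (p w)), c1]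
    simp only [mul_assoc]
  · have e0 : T 0 = 1 := by simpa using hT 0 0
    have e := key (natToInt m) m 0 (by funext i; simp [natToInt])
    dsimp only
    rw [e, e0, inv_one, mul_one]

/-- The restriction to degrees `(p, 0)` of an action by automorphisms of the whole graph. -/
def restrictAction (Ξ : KGraphStr (ι ⊕ Fin l) N) (h : Ξ.IsKGraph)
    (A : (Fin l → ℤ) → Equiv.Perm N) (hA : ∀ z w, A (z + w) = A z * A w)
    (hAut : ∀ z, Ξ.IsAut (A z)) : ZlAction l (restrict Ξ h) where
  act z x := ⟨A z x.1, fun j => by rw [(hAut z).map_d]; exact x.2 j⟩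
  act_zero x := by
    have e : A 0 = 1 := by simpa using hA 0 0
    apply Subtype.ext
    simp [e]
  act_add z w x := by
    apply Subtype.ext
    simp [hA]
  map_d z x := by
    funext i
    exact congrFun ((hAut z).map_d x.1) (Sum.inl i)
  map_rng z x := Subtype.ext ((hAut z).map_rng x.1)
  map_src z x := Subtype.ext ((hAut z).map_src x.1)
  map_comp z x y e := by
    have e1 : Ξ.src x.1 = Ξ.rng y.1 := congrArg Subtype.val e
    have e2 : Ξ.src (A z x.1) = Ξ.rng (A z y.1) := by
      rw [(hAut z).map_src, (hAut z).map_rng, e1]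
    apply Subtype.ext
    simp only [restrict, dif_pos e1, dif_pos e2]
    exact (hAut z).map_comp _ _ e1

/-- An action of `ℤ^l` is determined by its restriction to `ℕ^l`. -/
theorem zlAction_ext {Λ : KGraphStr ι N} {α β : ZlAction l Λ}
    (e : ∀ m x, α.act (natToInt m) x = β.act (natToInt m) x) : α = β := by
  have hact : α.act = β.act := by
    funext z x
    obtain ⟨p, q, hpq⟩ := exists_nat_sub z
    have hinj : Function.Injective (α.act (natToInt q)) := fun a b hab => by
      have := congrArg (α.act (-natToInt q)) hab
      rwa [← α.act_add, ← α.act_add, neg_add_cancel, α.act_zero, α.act_zero] at this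
    apply hinj
    rw [← α.act_add, e q (β.act z x), ← β.act_add, add_comm (natToInt q) z, hpq, e]
  cases α; cases β; cases hact; rfl

/-! ### The isomorphism with the crossed product -/

theorem exists_iso (h : Ξ.IsKGraph) (hs : Ξ.UniqueSrc) (hr : Ξ.op.UniqueSrc)
    (α : ZlAction l (restrict Ξ h)) (hα : ∀ m ξ, Ξ.Sq m ξ.1 (α.act (natToInt m) ξ).1) :
    ∃ f : N → {ξ : N // ∀ j, Ξ.d ξ (Sum.inr j) = 0} × (Fin l → ℕ),
      IsKGraphHom Ξ (crossedProd (restrict Ξ h) α) f ∧ Function.Bijective f := by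
  have ex : ∀ x : N, ∃ (p : {ξ : N // ∀ j, Ξ.d ξ (Sum.inr j) = 0} × (Fin l → ℕ)) (b : N),
      Ξ.d b = Sum.elim (0 : ι → ℕ) p.2 ∧ Ξ.src p.1.1 = Ξ.rng b ∧ Ξ.comp p.1.1 b = x := by
    intro x
    obtain ⟨⟨a, b⟩, ⟨h1, h2, h3, h4⟩, -⟩ := h.factorisation x
      (Sum.elim (fun i => Ξ.d x (Sum.inl i)) 0) (Sum.elim 0 (fun j => Ξ.d x (Sum.inr j)))
      (by funext i; cases i <;> simp)
    exact ⟨(⟨a, fun j => by rw [h1]; rfl⟩, _), b, h2, h3, h4⟩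
  choose f b hb hfb hx using ex
  have degInl : ∀ (a b : N) (m : Fin l → ℕ), Ξ.d b = Sum.elim (0 : ι → ℕ) m →
      Ξ.src a = Ξ.rng b → ∀ i, Ξ.d (Ξ.comp a b) (Sum.inl i) = Ξ.d a (Sum.inl i) := by
    intro a b m h1 h2 i
    rw [h.d_comp _ _ h2, h1]; simp
  have degInr : ∀ (a b : N) (m : Fin l → ℕ), Ξ.d b = Sum.elim (0 : ι → ℕ) m →
      Ξ.src a = Ξ.rng b → (∀ j, Ξ.d a (Sum.inr j) = 0) →
      ∀ j, Ξ.d (Ξ.comp a b) (Sum.inr j) = m j := by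
    intro a b m h1 h2 h3 j
    rw [h.d_comp _ _ h2, h1]; simp [h3]
  -- Any factorisation of the right shape computes `f`.
  have fu : ∀ (a : {ξ : N // ∀ j, Ξ.d ξ (Sum.inr j) = 0}) (c : N) (m : Fin l → ℕ),
      Ξ.d c = Sum.elim (0 : ι → ℕ) m → Ξ.src a.1 = Ξ.rng c →
      f (Ξ.comp a.1 c) = (a, m) := by
    intro a c m h1 h2
    set x := Ξ.comp a.1 c with hxdef
    have e1 : Ξ.d (f x).1.1 = Ξ.d a.1 := by
      funext i
      rcases i with i | j
      · rw [← degInl _ _ _ (hb x) (hfb x), hx, hxdef, degInl _ _ _ h1 h2]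
      · rw [(f x).1.2, a.2]
    have e2 : (f x).2 = m := by
      funext j
      rw [← degInr _ _ _ (hb x) (hfb x) (f x).1.2, hx, hxdef, degInr _ _ _ h1 h2 a.2]
    exact Prod.ext (Subtype.ext (h.factor_unique (hfb x) h2 ((hx x).trans hxdef) e1).1) e2
  -- The translation by `m` carries the source of `(0, m)`-morphisms to their range.
  have act_src : ∀ (c : N) (m : Fin l → ℕ) (u v : {ξ : N // ∀ j, Ξ.d ξ (Sum.inr j) = 0}),
      Ξ.d c = Sum.elim (0 : ι → ℕ) m → u.1 = Ξ.src c → v.1 = Ξ.rng c →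
      α.act (natToInt m) u = v := by
    intro c m u v hc hu hv
    refine Subtype.ext ((exists_unique_sq h hs m _).unique (hα m u) ?_)
    refine ⟨c, c, hc, by rw [hu, h.rng_src], hc, by rw [hv, h.src_rng], ?_⟩
    rw [hu, hv, h.id_comp, h.comp_id]
  have fvert : ∀ (u : {ξ : N // ∀ j, Ξ.d ξ (Sum.inr j) = 0}), Ξ.d u.1 = 0 →
      f u.1 = (u, 0) := by
    intro u hu
    have := fu u (Ξ.src u.1) 0 (by rw [h.d_src, elim_zero]) (h.rng_src _).symm
    rwa [h.comp_id] at this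
  refine ⟨f, ⟨fun x => ?_, fun x => ?_, fun x => ?_, fun x y e => ?_⟩, fun x y e => ?_, ?_⟩
  · funext i
    rcases i with i | j
    · change Ξ.d (f x).1.1 (Sum.inl i) = _
      rw [← degInl _ _ _ (hb x) (hfb x), hx]
    · change (f x).2 j = _
      rw [← degInr _ _ _ (hb x) (hfb x) (f x).1.2, hx]
  · have hv := fvert ((restrict Ξ h).rng (f x).1) (h.d_rng _)
    have er : Ξ.rng x = Ξ.rng (f x).1.1 := by
      conv_lhs => rw [← hx x, h.rng_comp _ _ (hfb x)]
    rw [er]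
    exact hv.symm
  · have hv := fvert ⟨Ξ.src x, fun j => congrFun (h.d_src x) (Sum.inr j)⟩ (h.d_src _)
    have es : Ξ.src x = Ξ.src (b x) := by
      conv_lhs => rw [← hx x, h.src_comp _ _ (hfb x)]
    have ha := act_src (b x) (f x).2 ⟨Ξ.src x, fun j => congrFun (h.d_src x) (Sum.inr j)⟩
      ((restrict Ξ h).src (f x).1) (hb x) es (hfb x)
    rw [hv]
    refine Prod.ext ?_ rfl
    change α.act (-natToInt (f x).2) ((restrict Ξ h).src (f x).1) = _
    rw [← ha, ← α.act_add, neg_add_cancel, α.act_zero]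
  · obtain ⟨η, c, h1, h2, h3, h4, h5⟩ := hα (f x).2 (f y).1
    have er : Ξ.rng y = Ξ.rng (f y).1.1 := by
      conv_lhs => rw [← hx y, h.rng_comp _ _ (hfb y)]
    have es : Ξ.src x = Ξ.src (b x) := by
      conv_lhs => rw [← hx x, h.src_comp _ _ (hfb x)]
    have hη : η = b x := (hs _ (h.d_rng (f y).1.1) (f x).2).unique ⟨h1, h2⟩
      ⟨hb x, by rw [← es, e, er]⟩
    subst hη
    set w := α.act (natToInt (f x).2) (f y).1 with hw
    have e1 : Ξ.src (f x).1.1 = Ξ.rng w.1 := by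
      rw [hfb x, ← h.rng_comp _ _ h2, ← h5, h.rng_comp _ _ h4]
    have e2 : Ξ.src c = Ξ.rng (b y) := by
      rw [← h.src_comp _ _ h4, h5, h.src_comp _ _ h2, hfb y]
    have e3 : Ξ.src w.1 = Ξ.rng (Ξ.comp c (b y)) := by rw [h.rng_comp _ _ e2, h4]
    have ecomp : ((restrict Ξ h).comp (f x).1 w).1 = Ξ.comp (f x).1.1 w.1 := by
      simp only [restrict, dif_pos e1]
    have key := fu ((restrict Ξ h).comp (f x).1 w) (Ξ.comp c (b y)) ((f x).2 + (f y).2)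
      (by rw [h.d_comp _ _ e2, h3, hb, elim_add])
      (by rw [ecomp, h.src_comp _ _ e1, e3])
    -- Both sides are `a · b · a' · b'`, where `x = a · b` and `y = a' · b'`.
    have hxy : Ξ.comp ((restrict Ξ h).comp (f x).1 w).1 (Ξ.comp c (b y)) = Ξ.comp x y := by
      rw [ecomp, h.comp_assoc _ _ _ e1 e3, ← h.comp_assoc _ _ _ h4 e2, h5,
        h.comp_assoc _ _ _ h2 (hfb y), hx y, ← h.comp_assoc _ _ _ (hfb x) (by rw [h2, er]), hx x]
    rw [hxy] at key
    exact key
  · have hbb : b x = b y := (hr (Ξ.src (f x).1.1) (h.d_src _) (f x).2).unique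
      ⟨hb x, (hfb x).symm⟩ ⟨by rw [e]; exact hb y, by rw [e]; exact (hfb y).symm⟩
    rw [← hx x, ← hx y, e, hbb]
  · rintro ⟨a, m⟩
    obtain ⟨c, ⟨h1, h2⟩, -⟩ := hr (Ξ.src a.1) (h.d_src _) m
    exact ⟨Ξ.comp a.1 c, fu a c m h1 h2.symm⟩

end KGraphStr

open KGraphStr

theorem stmt10 {k l : ℕ} {N : Type} (Ξ : KGraphStr (Fin k ⊕ Fin l) N)
    (hΞ : Ξ.IsKGraph)
    (huniq : ∀ v, Ξ.d v = 0 → ∀ j : Fin l,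
      (∃! f, Ξ.d f = Sum.elim (0 : Fin k → ℕ) (Pi.single j 1) ∧ Ξ.rng f = v) ∧
      (∃! f, Ξ.d f = Sum.elim (0 : Fin k → ℕ) (Pi.single j 1) ∧ Ξ.src f = v)) :
    -- for each vertex `v` and `m ∈ ℕ^l` there is a unique path `η_{v,m} ∈ Ξ^{(0,m)} v`
    (∀ v, Ξ.d v = 0 → ∀ m : Fin l → ℕ,
      ∃! η, Ξ.d η = Sum.elim (0 : Fin k → ℕ) m ∧ Ξ.src η = v) ∧
    -- there is a unique action `α` of `ℤ^l` on `Ξ^{(ℕ^k,0)}` such that, for `m ∈ ℕ^l`,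
    -- `α_m(ξ) = (η_{r(ξ),m} ξ)(0, d ξ)`, i.e. `α_m(ξ)·b = η_{r(ξ),m}·ξ` with `d b = (0,m)`
    (∃! α : ZlAction l (restrict Ξ hΞ),
      ∀ (m : Fin l → ℕ) (ξ : {ξ : N // ∀ j, Ξ.d ξ (Sum.inr j) = 0}),
        ∃ η b : N,
          Ξ.d η = Sum.elim (0 : Fin k → ℕ) m ∧ Ξ.src η = Ξ.rng ξ.1 ∧
          Ξ.d b = Sum.elim (0 : Fin k → ℕ) m ∧
          Ξ.src (α.act (natToInt m) ξ).1 = Ξ.rng b ∧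
          Ξ.comp (α.act (natToInt m) ξ).1 b = Ξ.comp η ξ.1) ∧
    -- and `Ξ` is isomorphic to the crossed product `Ξ^{(ℕ^k,0)} ×_α ℤ^l`
    (∀ α : ZlAction l (restrict Ξ hΞ),
      (∀ (m : Fin l → ℕ) (ξ : {ξ : N // ∀ j, Ξ.d ξ (Sum.inr j) = 0}),
        ∃ η b : N,
          Ξ.d η = Sum.elim (0 : Fin k → ℕ) m ∧ Ξ.src η = Ξ.rng ξ.1 ∧
          Ξ.d b = Sum.elim (0 : Fin k → ℕ) m ∧
          Ξ.src (α.act (natToInt m) ξ).1 = Ξ.rng b ∧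
          Ξ.comp (α.act (natToInt m) ξ).1 b = Ξ.comp η ξ.1) →
      ∃ f : N → {ξ : N // ∀ j, Ξ.d ξ (Sum.inr j) = 0} × (Fin l → ℕ),
        IsKGraphHom Ξ (crossedProd (restrict Ξ hΞ) α) f ∧ Function.Bijective f) := by
  have hs : Ξ.UniqueSrc := exists_unique_src hΞ fun v hv j => (huniq v hv j).2
  have hr : Ξ.op.UniqueSrc := exists_unique_src hΞ.op fun v hv j => (huniq v hv j).1
  refine ⟨hs, ?_, fun α hα => exists_iso hΞ hs hr α hα⟩
  choose T hT using exists_perm hΞ hs hr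
  have hAdd : ∀ m n, T (m + n) = T m * T n := fun m n => Equiv.ext fun x =>
    (exists_unique_sq hΞ hs (m + n) x).unique (hT _ x) (Sq.add hΞ (hT m _) (hT n x))
  obtain ⟨A, hA, hAT, hAf⟩ := exists_int_extension T hAdd
  have hAut : ∀ z, Ξ.IsAut (A z) := fun z => by
    obtain ⟨p, q, e⟩ := hAf z
    rw [e]
    exact (Sq.aut hΞ hs (hT p)).mul (Sq.aut hΞ hs (hT q)).inv
  refine ⟨restrictAction Ξ hΞ A hA hAut, fun m ξ => ?_, fun β hβ => zlAction_ext fun m ξ => ?_⟩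
  · change Ξ.Sq m ξ.1 (A (natToInt m) ξ.1)
    rw [hAT]
    exact hT m ξ.1
  · refine Subtype.ext ((exists_unique_sq hΞ hs m ξ.1).unique (hβ m ξ) ?_)
    change Ξ.Sq m ξ.1 (A (natToInt m) ξ.1)
    rw [hAT]
    exact hT m ξ.1
end
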